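/- Let K : 𝕋^{d−1} × ℝ → [0,+∞) be measurable and suppose there exist p > 2, s ∈ (0,1) and γ > 0 such that K(ξ) ≤ γ |ξ_d|^{−p} whenever |ξ_d| ≥ 1 and K(ξ) ≤ γ ‖ξ‖_♯^{−(d+s)} whenever |ξ_d| < 1. Then the nonlocal perimeter 𝒫_K(E) := ∫_E ∫_{E^c} K(x−y) dy dx is a generalized perimeter, i.e. it satisfies properties (i)–(vi). -/

import Mathlib

open MeasureTheory Filter Set
open scoped ENNReal

noncomputable section

/-- The flat torus `𝕋^{d-1}`. -/
abbrev Torus (d : ℕ) : Type := Fin (d-1) → AddCircle (1:ℝ)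

/-- The periodic strip `𝕋^{d-1} × ℝ`. -/
abbrev Cyl (d : ℕ) : Type := Torus d × ℝ

/-- The subgraph of a function `g : 𝕋^{d-1} → ℝ`. -/
def subgraph (d : ℕ) (g : Torus d → ℝ) : Set (Cyl d) := {x | x.2 ≤ g x.1}

/-- The class `𝔠_L` of periodic `L`-Lipschitz subgraphs. -/
def LipClass (d : ℕ) (L : ℝ) : Set (Set (Cyl d)) :=
  {E | ∃ g : Torus d → ℝ, LipschitzWith (Real.toNNReal L) g ∧ E = subgraph d g}

/-- The slab `𝕊^d_R = 𝕋^{d-1} × (-R, R)`. -/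
def SlabR (d : ℕ) (R : ℝ) : Set (Cyl d) := {x | -R < x.2 ∧ x.2 < R}

/-- The class `𝔐_R` of measurable sets squeezed between two halfspaces. -/
def MR (d : ℕ) (R : ℝ) : Set (Set (Cyl d)) :=
  {E | MeasurableSet E ∧ {x : Cyl d | x.2 < -R} ⊆ E ∧ E ⊆ {x : Cyl d | x.2 < R}}

/-- The periodic halfspace `H_λ = 𝕋^{d-1} × (-∞, λ)`. -/
def halfspace (d : ℕ) (lam : ℝ) : Set (Cyl d) := {x | x.2 < lam}

/-- Translation of `𝕋^{d-1} × ℝ` by a vector `τ ∈ ℝ^d = ℝ^{d-1} × ℝ`,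
acting through the quotient. -/
def translCyl (d : ℕ) (τ : (Fin (d-1) → ℝ) × ℝ) (x : Cyl d) : Cyl d :=
  (fun i => x.1 i + (τ.1 i : AddCircle (1:ℝ)), x.2 + τ.2)

/-- A generalized perimeter: a functional `𝒫 : 𝔐 → [0,+∞]` satisfying properties
(i)-(vi) of Definition 1.2. -/
structure GenPerimeter (d : ℕ) where
  P : Set (Cyl d) → ℝ≥0∞
  /-- (i) finiteness on periodic Lipschitz subgraphs -/
  lip_finite : ∀ L : ℝ, 0 < L → ∀ E ∈ LipClass d L, P E < ⊤
  /-- (ii) `𝒫(∅) = 0` -/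
  empty_eq : P ∅ = 0
  /-- (ii) `𝒫(𝕋^{d-1} × ℝ) = 0` -/
  univ_eq : P Set.univ = 0
  /-- (iii) invariance under modifications on null sets -/
  congr_ae : ∀ E E' : Set (Cyl d), volume (symmDiff E E') = 0 → P E = P E'
  /-- (iv) lower semicontinuity w.r.t. local `L¹` convergence -/
  lsc : ∀ (En : ℕ → Set (Cyl d)) (E : Set (Cyl d)),
      (∀ R : ℝ, 0 < R →
        Tendsto (fun n => volume (symmDiff (En n) E ∩ SlabR d R)) atTop (nhds 0)) →
      P E ≤ liminf (fun n => P (En n)) atTop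
  /-- (v) submodularity -/
  submodular : ∀ E F : Set (Cyl d), P (E ∪ F) + P (E ∩ F) ≤ P E + P F
  /-- (vi) translational invariance -/
  transl_inv : ∀ (E : Set (Cyl d)) (τ : (Fin (d-1) → ℝ) × ℝ), P (translCyl d τ '' E) = P E

/-- Signed distance from a set `E`. -/
def sdist (d : ℕ) (E : Set (Cyl d)) (x : Cyl d) : ℝ :=
  Metric.infDist x E - Metric.infDist x Eᶜ

/-- The incremental functional `𝓕̃_h(E, F) = 𝒫(F) + (1/h) ∫_{F ∩ 𝕊^d_R} sdist_E`. -/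
def Ftilde (d : ℕ) (P : GenPerimeter d) (R h : ℝ) (E F : Set (Cyl d)) : EReal :=
  (P.P F : EReal) + (((1/h) * ∫ x in F ∩ SlabR d R, sdist d E x) : ℝ)

/-- `F` minimizes `𝓕̃_h(E, ·)` in `𝔐_R`. -/
def IsMinimizer (d : ℕ) (P : GenPerimeter d) (R h : ℝ) (E F : Set (Cyl d)) : Prop :=
  F ∈ MR d R ∧ ∀ F' ∈ MR d R, Ftilde d P R h E F ≤ Ftilde d P R h E F'

/-- The periodic norm `‖ξ‖_♯ = (|ξ_d|² + min_{z'∈ℤ^{d-1}} |ξ̃' + z'|²)^{1/2}`. -/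
def pnorm (d : ℕ) (ξ : Cyl d) : ℝ := Real.sqrt (ξ.2 ^ 2 + ∑ i, ‖ξ.1 i‖ ^ 2)

/-- The nonlocal perimeter governed by a kernel `K`:
`𝒫_K(E) = ∫_E ∫_{Eᶜ} K(x - y) dy dx`. -/
def PK (d : ℕ) (K : Cyl d → ℝ) (E : Set (Cyl d)) : ℝ≥0∞ :=
  ∫⁻ x in E, ∫⁻ y in Eᶜ, ENNReal.ofReal (K (x - y)) ∂volume ∂volume

instance instHaarTorus (d : ℕ) : (volume : Measure (Torus d)).IsAddHaarMeasure :=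
  inferInstanceAs (Measure.pi (fun _ : Fin (d-1) => (volume : Measure (AddCircle (1:ℝ))))).IsAddHaarMeasure

instance instHaarCyl (d : ℕ) : (volume : Measure (Cyl d)).IsAddHaarMeasure :=
  inferInstanceAs ((volume : Measure (Torus d)).prod (volume : Measure ℝ)).IsAddHaarMeasure

instance instProbCircle : IsProbabilityMeasure (volume : Measure (AddCircle (1:ℝ))) :=
  ⟨by simp [AddCircle.measure_univ]⟩

instance instProbTorus (d : ℕ) : IsProbabilityMeasure (volume : Measure (Torus d)) :=
  inferInstanceAs (IsProbabilityMeasure (Measure.pi (fun _ : Fin (d-1) => (volume : Measure (AddCircle (1:ℝ))))))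

/-- The bilinear form. -/
def QQ (d : ℕ) (k : Cyl d → Cyl d → ℝ≥0∞) (A B : Set (Cyl d)) : ℝ≥0∞ :=
  ∫⁻ x in A, ∫⁻ y in B, k x y ∂volume ∂volume

lemma QQ_mono {d : ℕ} {k k' : Cyl d → Cyl d → ℝ≥0∞} (h : ∀ x y, k x y ≤ k' x y)
    {A A' B B' : Set (Cyl d)} (hA : A ⊆ A') (hB : B ⊆ B') : QQ d k A B ≤ QQ d k' A' B' := by
  unfold QQ
  refine lintegral_mono' (Measure.restrict_mono hA le_rfl) fun x => ?_
  exact lintegral_mono' (Measure.restrict_mono hB le_rfl) fun y => h x y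

lemma QQ_hull {d : ℕ} (k : Cyl d → Cyl d → ℝ≥0∞) (A B : Set (Cyl d)) :
    QQ d k (toMeasurable volume A) (toMeasurable volume B) = QQ d k A B := by
  unfold QQ
  rw [Measure.restrict_toMeasurable_of_sFinite, Measure.restrict_toMeasurable_of_sFinite]

lemma QQ_indicator {d : ℕ} (k : Cyl d → Cyl d → ℝ≥0∞) {A B : Set (Cyl d)}
    (hA : MeasurableSet A) (hB : MeasurableSet B) :
    QQ d k A B = ∫⁻ x, ∫⁻ y, A.indicator 1 x * (B.indicator 1 y * k x y) := by
  unfold QQ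
  rw [← lintegral_indicator hA]
  congr 1; ext x
  by_cases hx : x ∈ A
  · simp only [hx, indicator_of_mem, Pi.one_apply, one_mul]
    rw [← lintegral_indicator hB]
    congr 1; ext y
    by_cases hy : y ∈ B <;> simp [hy]
  · simp [hx]

lemma QQ_submod {d : ℕ} (k : Cyl d → Cyl d → ℝ≥0∞) (hk : Measurable (Function.uncurry k))
    {A A' B B' : Set (Cyl d)}
    (hA : MeasurableSet A) (hB : MeasurableSet B) (hA' : MeasurableSet A')
    (hB' : MeasurableSet B') :
    QQ d k (A ∪ A') (B ∩ B') + QQ d k (A ∩ A') (B ∪ B') ≤ QQ d k A B + QQ d k A' B' := by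
  have hm : ∀ A B : Set (Cyl d), MeasurableSet A → MeasurableSet B →
      Measurable (fun z : Cyl d × Cyl d => A.indicator 1 z.1 * (B.indicator 1 z.2 * k z.1 z.2)) := by
    intro A B hA hB
    have h1 : Measurable (A.indicator (1 : Cyl d → ℝ≥0∞)) := measurable_one.indicator hA
    have h2 : Measurable (B.indicator (1 : Cyl d → ℝ≥0∞)) := measurable_one.indicator hB
    exact (h1.comp measurable_fst).mul ((h2.comp measurable_snd).mul hk)
  rw [QQ_indicator k (hA.union hA') (hB.inter hB'), QQ_indicator k (hA.inter hA') (hB.union hB'),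
    QQ_indicator k hA hB, QQ_indicator k hA' hB']
  rw [← lintegral_add_left (hm _ _ (hA.union hA') (hB.inter hB')).lintegral_prod_right',
    ← lintegral_add_left (hm _ _ hA hB).lintegral_prod_right']
  refine lintegral_mono fun x => ?_
  simp only
  have hm' : ∀ A B : Set (Cyl d), MeasurableSet A → MeasurableSet B →
      Measurable (fun y : Cyl d => A.indicator 1 x * (B.indicator 1 y * k x y)) :=
    fun A B hA hB => (hm A B hA hB).comp (measurable_prodMk_left (x := x))
  rw [← lintegral_add_left (hm' _ _ (hA.union hA') (hB.inter hB')),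
    ← lintegral_add_left (hm' _ _ hA hB)]
  refine lintegral_mono fun y => ?_
  by_cases h1 : x ∈ A <;> by_cases h2 : x ∈ A' <;> by_cases h3 : y ∈ B <;>
    by_cases h4 : y ∈ B' <;> simp [h1, h2, h3, h4]

lemma PK_eq_QQ (d : ℕ) (K : Cyl d → ℝ) (E : Set (Cyl d)) :
    PK d K E = QQ d (fun x y => ENNReal.ofReal (K (x - y))) E Eᶜ := rfl

lemma meas_kern {d : ℕ} {K : Cyl d → ℝ} (hK : Measurable K) :
    Measurable (Function.uncurry fun x y : Cyl d => ENNReal.ofReal (K (x - y))) :=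
  ENNReal.measurable_ofReal.comp (hK.comp (measurable_fst.sub measurable_snd))

lemma PK_submod {d : ℕ} {K : Cyl d → ℝ} (hK : Measurable K) (E F : Set (Cyl d)) :
    PK d K (E ∪ F) + PK d K (E ∩ F) ≤ PK d K E + PK d K F := by
  simp only [PK_eq_QQ]
  set k : Cyl d → Cyl d → ℝ≥0∞ := fun x y => ENNReal.ofReal (K (x - y))
  have hk : Measurable (Function.uncurry k) := meas_kern hK
  rw [← QQ_hull k E, ← QQ_hull k F]
  refine le_trans (add_le_add ?_ ?_) (QQ_submod k hk (measurableSet_toMeasurable _ _)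
    (measurableSet_toMeasurable _ _) (measurableSet_toMeasurable _ _)
    (measurableSet_toMeasurable _ _))
  · refine QQ_mono (fun _ _ => le_rfl) ?_ ?_
    · exact union_subset_union (subset_toMeasurable _ _) (subset_toMeasurable _ _)
    · rw [compl_union]
      exact inter_subset_inter (subset_toMeasurable _ _) (subset_toMeasurable _ _)
  · refine QQ_mono (fun _ _ => le_rfl) ?_ ?_
    · exact inter_subset_inter (subset_toMeasurable _ _) (subset_toMeasurable _ _)
    · rw [compl_inter]
      exact union_subset_union (subset_toMeasurable _ _) (subset_toMeasurable _ _)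

lemma PK_congr {d : ℕ} (K : Cyl d → ℝ) (E E' : Set (Cyl d))
    (h : volume (symmDiff E E') = 0) : PK d K E = PK d K E' := by
  have h1 : E =ᵐ[volume] E' := measure_symmDiff_eq_zero_iff.mp h
  have h2 : (Eᶜ : Set (Cyl d)) =ᵐ[volume] (E'ᶜ : Set (Cyl d)) := h1.compl
  unfold PK
  rw [Measure.restrict_congr_set h1, Measure.restrict_congr_set h2]

lemma PK_transl {d : ℕ} (K : Cyl d → ℝ) (E : Set (Cyl d))
    (τ : (Fin (d-1) → ℝ) × ℝ) : PK d K (translCyl d τ '' E) = PK d K E := by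
  let t : Cyl d := (fun i => (τ.1 i : AddCircle (1:ℝ)), τ.2)
  have ht : translCyl d τ = MeasurableEquiv.addRight t := by
    ext x <;> simp [translCyl, t]
  have hmp : MeasurePreserving (MeasurableEquiv.addRight t) (volume : Measure (Cyl d)) volume :=
    measurePreserving_add_right volume t
  have hr : ∀ s : Set (Cyl d), (volume : Measure (Cyl d)).restrict (translCyl d τ '' s) =
      ((volume : Measure (Cyl d)).restrict s).map (MeasurableEquiv.addRight t) := by
    intro s
    conv_lhs => rw [← hmp.map_eq]
    rw [(MeasurableEquiv.addRight t).measurableEmbedding.restrict_map, ht,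
      preimage_image_eq _ (MeasurableEquiv.addRight t).injective]
  have hc : (translCyl d τ '' E)ᶜ = translCyl d τ '' Eᶜ := by
    rw [ht, image_compl_eq (MeasurableEquiv.addRight t).bijective]
  unfold PK
  rw [hc, hr, hr, (MeasurableEquiv.addRight t).measurableEmbedding.lintegral_map]
  congr 1; ext x
  rw [(MeasurableEquiv.addRight t).measurableEmbedding.lintegral_map]
  simp

lemma measSlab (d : ℕ) (R : ℝ) : MeasurableSet (SlabR d R) := by
  unfold SlabR
  exact (measurableSet_lt measurable_const measurable_snd).inter
    (measurableSet_lt measurable_snd measurable_const)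

lemma volSlab (d : ℕ) (R : ℝ) : volume (SlabR d R) < ⊤ := by
  have : SlabR d R = (univ : Set (Torus d)) ×ˢ Ioo (-R) R := by
    ext x; simp [SlabR]
  rw [this, Measure.volume_eq_prod, Measure.prod_prod]
  simp

/-- Truncated kernel. -/
def kt (d : ℕ) (k : Cyl d → Cyl d → ℝ≥0∞) (n : ℕ) (x y : Cyl d) : ℝ≥0∞ :=
  (SlabR d n).indicator 1 x * ((SlabR d n).indicator 1 y * min (k x y) n)

lemma kt_meas {d : ℕ} {k : Cyl d → Cyl d → ℝ≥0∞} (hk : Measurable (Function.uncurry k)) (n : ℕ) :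
    Measurable (Function.uncurry (kt d k n)) := by
  have h1 : Measurable ((SlabR d n).indicator (1 : Cyl d → ℝ≥0∞)) :=
    measurable_one.indicator (measSlab d n)
  exact (h1.comp measurable_fst).mul ((h1.comp measurable_snd).mul (hk.min measurable_const))

lemma kt_le {d : ℕ} {k : Cyl d → Cyl d → ℝ≥0∞} (n : ℕ) (x y : Cyl d) : kt d k n x y ≤ k x y := by
  unfold kt
  by_cases h1 : x ∈ SlabR d n <;> by_cases h2 : y ∈ SlabR d n <;> simp [h1, h2]

lemma kt_mono {d : ℕ} {k : Cyl d → Cyl d → ℝ≥0∞} (x y : Cyl d) :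
    Monotone (fun n => kt d k n x y) := by
  intro m n hmn
  have h : SlabR d m ⊆ SlabR d n := by
    intro z hz
    have : (m:ℝ) ≤ n := by exact_mod_cast hmn
    exact ⟨by linarith [hz.1], by linarith [hz.2]⟩
  simp only [kt]
  gcongr ?_ * (?_ * ?_)
  · exact indicator_le_indicator_of_subset h (fun _ => zero_le_one) x
  · exact indicator_le_indicator_of_subset h (fun _ => zero_le_one) y
  · exact min_le_min le_rfl (by exact_mod_cast hmn)

lemma kt_iSup {d : ℕ} {k : Cyl d → Cyl d → ℝ≥0∞} (hfin : ∀ x y, k x y ≠ ⊤) (x y : Cyl d) :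
    ⨆ n, kt d k n x y = k x y := by
  refine le_antisymm (iSup_le fun n => kt_le n x y) ?_
  obtain ⟨n1, h1⟩ := exists_nat_gt |x.2|
  obtain ⟨n2, h2⟩ := exists_nat_gt |y.2|
  obtain ⟨n3, h3⟩ := ENNReal.exists_nat_gt (hfin x y)
  refine le_trans ?_ (le_iSup _ (max n1 (max n2 n3)))
  set n := max n1 (max n2 n3)
  have e1 : (n1:ℝ) ≤ n := by exact_mod_cast le_max_left _ _
  have e2 : (n2:ℝ) ≤ n := by exact_mod_cast (le_max_left _ _).trans (le_max_right _ _)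
  have e3 : (n3:ℝ≥0∞) ≤ n := by exact_mod_cast (le_max_right _ _).trans (le_max_right _ _)
  have hx : x ∈ SlabR d n := abs_lt.mp (h1.trans_le e1)
  have hy : y ∈ SlabR d n := abs_lt.mp (h2.trans_le e2)
  simp [kt, hx, hy, h3.le.trans e3]

lemma kt_meas_int {d : ℕ} {k : Cyl d → Cyl d → ℝ≥0∞} (hk : Measurable (Function.uncurry k)) (n : ℕ)
    (B : Set (Cyl d)) : Measurable (fun x => ∫⁻ y in B, kt d k n x y) :=
  (kt_meas hk n).lintegral_prod_right'

lemma QQ_iSup {d : ℕ} {k : Cyl d → Cyl d → ℝ≥0∞} (hk : Measurable (Function.uncurry k))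
    (hfin : ∀ x y, k x y ≠ ⊤) (A B : Set (Cyl d)) :
    QQ d k A B = ⨆ n, QQ d (kt d k n) A B := by
  unfold QQ
  rw [← lintegral_iSup (fun n => kt_meas_int hk n B)
    (fun m n hmn x => lintegral_mono fun y => kt_mono x y hmn)]
  congr 1; ext x
  have := lintegral_iSup (μ := volume.restrict B) (f := fun n y => kt d k n x y)
    (fun n => (kt_meas hk n).comp (measurable_prodMk_left (x := x)))
    (fun m n hmn y => kt_mono x y hmn)
  rw [← this]
  simp_rw [kt_iSup hfin]

lemma QQ_kt_le {d : ℕ} (k : Cyl d → Cyl d → ℝ≥0∞) (n : ℕ) (A B : Set (Cyl d)) :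
    QQ d (kt d k n) A B ≤ n * volume (A ∩ SlabR d n) * volume (B ∩ SlabR d n) := by
  have hS := measSlab d n
  have h1 : Measurable ((SlabR d n).indicator (1 : Cyl d → ℝ≥0∞)) := measurable_one.indicator hS
  calc QQ d (kt d k n) A B
      ≤ ∫⁻ x in A, ∫⁻ y in B, (SlabR d n).indicator 1 x * ((SlabR d n).indicator 1 y * n) := by
        unfold QQ kt
        gcongr
        exact min_le_right _ _
    _ = _ := by
        simp_rw [lintegral_const_mul _ (h1.mul_const _), lintegral_mul_const _ h1]
        rw [lintegral_indicator_one hS, lintegral_indicator_one hS,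
          Measure.restrict_apply hS, Measure.restrict_apply hS, inter_comm A, inter_comm B]
        ring

lemma QQ_compare {d : ℕ} {k : Cyl d → Cyl d → ℝ≥0∞} (hk : Measurable (Function.uncurry k))
    (n : ℕ) (E F : Set (Cyl d)) :
    QQ d (kt d k n) E Eᶜ ≤ QQ d k F Fᶜ +
      2 * (n * volume (SlabR d n)) * volume (symmDiff F E ∩ SlabR d n) := by
  have s1 : QQ d (kt d k n) E Eᶜ ≤ QQ d (kt d k n) F Eᶜ + QQ d (kt d k n) (E \ F) Eᶜ := by
    refine le_trans (QQ_mono (fun _ _ => le_rfl) (A' := F ∪ (E \ F)) (by simp) subset_rfl) ?_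
    exact lintegral_union_le _ _ _
  have s2 : QQ d (kt d k n) F Eᶜ ≤ QQ d (kt d k n) F Fᶜ + QQ d (kt d k n) F (F \ E) := by
    refine le_trans (QQ_mono (fun _ _ => le_rfl) subset_rfl (B' := Fᶜ ∪ (F \ E)) ?_) ?_
    · intro x hx; by_cases h : x ∈ F
      · exact Or.inr ⟨h, hx⟩
      · exact Or.inl h
    · unfold QQ
      rw [← lintegral_add_left (kt_meas_int hk n _)]
      exact lintegral_mono fun x => lintegral_union_le _ _ _
  have b1 : QQ d (kt d k n) (E \ F) Eᶜ ≤
      n * volume (SlabR d n) * volume (symmDiff F E ∩ SlabR d n) := by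
    refine (QQ_kt_le k n _ _).trans ?_
    calc _ ≤ n * volume (symmDiff F E ∩ SlabR d n) * volume (SlabR d n) := by
          gcongr
          · exact fun x hx => Or.inr hx
          · exact inter_subset_right
      _ = _ := by ring
  have b2 : QQ d (kt d k n) F (F \ E) ≤
      n * volume (SlabR d n) * volume (symmDiff F E ∩ SlabR d n) := by
    refine (QQ_kt_le k n _ _).trans ?_
    gcongr
    · exact inter_subset_right
    · exact fun x hx => Or.inl hx
  have b3 : QQ d (kt d k n) F Fᶜ ≤ QQ d k F Fᶜ := QQ_mono (fun x y => kt_le n x y) subset_rfl subset_rfl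
  calc _ ≤ QQ d k F Fᶜ + n * volume (SlabR d n) * volume (symmDiff F E ∩ SlabR d n) +
        n * volume (SlabR d n) * volume (symmDiff F E ∩ SlabR d n) :=
        s1.trans (add_le_add (s2.trans (add_le_add b3 b2)) b1)
    _ = _ := by ring

lemma PK_lsc {d : ℕ} {K : Cyl d → ℝ} (hK : Measurable K) (En : ℕ → Set (Cyl d)) (E : Set (Cyl d))
    (h : ∀ R : ℝ, 0 < R →
        Tendsto (fun n => volume (symmDiff (En n) E ∩ SlabR d R)) atTop (nhds 0)) :
    PK d K E ≤ liminf (fun n => PK d K (En n)) atTop := by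
  simp only [PK_eq_QQ]
  set k : Cyl d → Cyl d → ℝ≥0∞ := fun x y => ENNReal.ofReal (K (x - y))
  have hk : Measurable (Function.uncurry k) := meas_kern hK
  rw [QQ_iSup hk (fun x y => ENNReal.ofReal_ne_top)]
  refine iSup_le fun m => ?_
  have h0 : Tendsto (fun n => 2 * (m * volume (SlabR d m)) *
      volume (symmDiff (En n) E ∩ SlabR d m)) atTop (nhds 0) := by
    rcases Nat.eq_zero_or_pos m with rfl | hm
    · simp
    · have hc : 2 * (m * volume (SlabR d m)) ≠ ⊤ :=
        ENNReal.mul_ne_top (by simp) (ENNReal.mul_ne_top (by simp) (volSlab d m).ne)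
      simpa using ENNReal.Tendsto.const_mul (h m (by exact_mod_cast hm)) (Or.inr hc)
  refine ENNReal.le_of_forall_pos_le_add fun ε hε _ => ?_
  have hev : ∀ᶠ n in atTop, 2 * (m * volume (SlabR d m)) *
      volume (symmDiff (En n) E ∩ SlabR d m) ≤ ε := by
    filter_upwards [h0.eventually_lt_const (show (0:ℝ≥0∞) < ε by exact_mod_cast hε)] with n hn
      using hn.le
  rw [← tsub_le_iff_right]
  refine le_liminf_of_le (by isBoundedDefault) ?_
  filter_upwards [hev] with n hn
  rw [tsub_le_iff_right]
  exact (QQ_compare hk m E (En n)).trans (by gcongr)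

instance instNegCircle : (volume : Measure (AddCircle (1:ℝ))).IsNegInvariant :=
  Measure.IsAddHaarMeasure.isNegInvariant_of_regular _

instance instNegTorus (d : ℕ) : (volume : Measure (Torus d)).IsNegInvariant :=
  inferInstanceAs (Measure.pi (fun _ : Fin (d-1) => (volume : Measure (AddCircle (1:ℝ))))).IsNegInvariant

instance instNegCyl (d : ℕ) : (volume : Measure (Cyl d)).IsNegInvariant := by
  constructor
  have h1 : MeasurePreserving (Neg.neg : Torus d → Torus d) volume volume :=
    Measure.measurePreserving_neg _
  have h2 : MeasurePreserving (Neg.neg : ℝ → ℝ) volume volume :=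
    Measure.measurePreserving_neg _
  exact (h1.prod h2).map_eq

lemma PK_subgraph_le {d : ℕ} {K : Cyl d → ℝ} (hK : Measurable K) {L : ℝ} (hL : 0 < L)
    {g : Torus d → ℝ} (hg : LipschitzWith (Real.toNNReal L) g) :
    PK d K (subgraph d g) ≤
      ∫⁻ ξ : Cyl d, ENNReal.ofReal (K ξ) * ENNReal.ofReal (L * ‖ξ.1‖ + |ξ.2|) := by
  have hgm : Measurable g := hg.continuous.measurable
  have hE : MeasurableSet (subgraph d g) :=
    measurableSet_le measurable_snd (hgm.comp measurable_fst)
  set E := subgraph d g with hEdef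
  have hkm : Measurable fun ξ : Cyl d => ENNReal.ofReal (K ξ) := hK.ennreal_ofReal
  have h1 : Measurable (E.indicator (1 : Cyl d → ℝ≥0∞)) := measurable_one.indicator hE
  have h2 : Measurable (Eᶜ.indicator (1 : Cyl d → ℝ≥0∞)) := measurable_one.indicator hE.compl
  rw [PK_eq_QQ, QQ_indicator _ hE hE.compl]
  have hsub : ∀ x : Cyl d,
      ∫⁻ y, E.indicator 1 x * (Eᶜ.indicator 1 y * ENNReal.ofReal (K (x - y))) =
      ∫⁻ ξ, E.indicator 1 x * (Eᶜ.indicator 1 (x - ξ) * ENNReal.ofReal (K ξ)) := by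
    intro x
    rw [← lintegral_sub_left_eq_self (fun ξ : Cyl d =>
      E.indicator 1 x * (Eᶜ.indicator 1 (x - ξ) * ENNReal.ofReal (K ξ))) x]
    simp
  simp_rw [hsub]
  rw [lintegral_lintegral_swap]
  swap
  · exact ((h1.comp measurable_fst).mul ((h2.comp (measurable_fst.sub measurable_snd)).mul
      (hkm.comp measurable_snd))).aemeasurable
  refine lintegral_mono fun ξ => ?_
  have hV : MeasurableSet {x : Cyl d | x ∈ E ∧ x - ξ ∈ Eᶜ} :=
    hE.inter ((measurable_id.sub_const ξ) hE.compl)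
  calc ∫⁻ x, E.indicator 1 x * (Eᶜ.indicator 1 (x - ξ) * ENNReal.ofReal (K ξ))
      = ∫⁻ x, ENNReal.ofReal (K ξ) * {x : Cyl d | x ∈ E ∧ x - ξ ∈ Eᶜ}.indicator 1 x := by
        congr 1; ext x
        by_cases a : x ∈ E <;> by_cases b : x - ξ ∈ E <;> simp [a, b]
    _ = ENNReal.ofReal (K ξ) * volume {x : Cyl d | x ∈ E ∧ x - ξ ∈ Eᶜ} := by
        rw [lintegral_const_mul _ (measurable_one.indicator hV), lintegral_indicator_one hV]
    _ ≤ _ := by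
        gcongr
        rw [Measure.volume_eq_prod, Measure.prod_apply hV]
        calc _ ≤ ∫⁻ x : Torus d, ENNReal.ofReal (L * ‖ξ.1‖ + |ξ.2|) := by
              refine lintegral_mono fun x => ?_
              have hsubs : Prod.mk x ⁻¹' {x : Cyl d | x ∈ E ∧ x - ξ ∈ Eᶜ} ⊆
                  Ioc (g (x - ξ.1) + ξ.2) (g x) := by
                intro t ht
                have ha : t ≤ g x := ht.1
                have hb : ¬ (t - ξ.2 ≤ g (x - ξ.1)) := ht.2
                exact ⟨by linarith, ha⟩
              refine (measure_mono hsubs).trans ?_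
              rw [Real.volume_Ioc]
              refine ENNReal.ofReal_le_ofReal ?_
              have := hg.dist_le_mul x (x - ξ.1)
              rw [Real.dist_eq, Real.coe_toNNReal L hL.le, dist_eq_norm, sub_sub_cancel] at this
              have h3 := le_abs_self (g x - g (x - ξ.1))
              have h4 := neg_abs_le ξ.2
              linarith
          _ = _ := by simp

lemma lintegral_pi_prod {X : Type} [MeasureSpace X] [SigmaFinite (volume : Measure X)] {f : X → ℝ≥0∞}
    (hf : Measurable f) (n : ℕ) :
    ∫⁻ x : Fin n → X, ∏ i, f (x i) = (∫⁻ x, f x) ^ n := by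
  induction n with
  | zero => simp [volume_pi]
  | succ n ih =>
    have h := (volume_preserving_piFinSuccAbove (fun _ : Fin (n+1) => X) 0).lintegral_comp_emb
      (MeasurableEquiv.measurableEmbedding _) (fun z => f z.1 * ∏ i, f (z.2 i))
    have h' : ∀ x : Fin (n+1) → X, ∏ i, f (x i) = f (x 0) * ∏ i : Fin n, f (x i.succ) :=
      fun x => Fin.prod_univ_succ _
    simp_rw [h']
    refine Eq.trans ?_ (h.trans ?_)
    · rfl
    · rw [Measure.volume_eq_prod, lintegral_prod_mul (f := f) (g := fun z : Fin n → X => ∏ i, f (z i))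
        hf.aemeasurable
        (Finset.measurable_prod _ fun i _ => hf.comp (measurable_pi_apply i)).aemeasurable, ih,
        pow_succ']

lemma real_near {α : ℝ} (hα : α < 1) :
    ∫⁻ t in Ioo (-1:ℝ) 1, ‖t‖ₑ ^ (-α) < ⊤ := by
  have h : IntegrableOn (fun t : ℝ => ‖t‖ ^ (-α)) (Metric.ball 0 1) :=
    integrableOn_ball_of_norm_le_rpow (C := 1) (α := α) (by simp) (by simpa using hα)
      (Eventually.of_forall fun x => by
        simp [abs_of_nonneg (Real.rpow_nonneg (abs_nonneg x) (-α))])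
      (Measurable.aestronglyMeasurable (by fun_prop))
  have h2 := h.2
  rw [Real.ball_eq_Ioo, zero_sub, zero_add] at h2
  refine lt_of_eq_of_lt ?_ h2
  refine lintegral_congr_ae (ae_restrict_of_ae ?_)
  have : ∀ᵐ t : ℝ, t ≠ 0 := by simp [ae_iff]
  filter_upwards [this] with t ht
  have ht' : 0 < ‖t‖ := norm_pos_iff.mpr ht
  rw [← ofReal_norm, ENNReal.ofReal_rpow_of_pos ht', ← ofReal_norm,
    Real.norm_of_nonneg (Real.rpow_nonneg ht'.le _)]

lemma circle_near {α : ℝ} (hα : α < 1) :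
    ∫⁻ t : AddCircle (1:ℝ), ‖t‖ₑ ^ (-α) < ⊤ := by
  rw [← AddCircle.lintegral_preimage 1 (-1/2)]
  refine lt_of_le_of_lt ?_ (real_near hα)
  calc _ = ∫⁻ t in Ioc (-1/2:ℝ) (-1/2 + 1), ‖t‖ₑ ^ (-α) := by
        refine setLIntegral_congr_fun measurableSet_Ioc fun t ht => ?_
        have : ‖(t : AddCircle (1:ℝ))‖ = ‖t‖ := by
          rw [Real.norm_eq_abs, AddCircle.norm_coe_eq_abs_iff _ one_ne_zero, abs_le]
          norm_num
          constructor <;> linarith [ht.1, ht.2]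
        rw [← ofReal_norm, this, ofReal_norm]
    _ ≤ _ := by
        refine lintegral_mono_set fun t ht => ?_
        constructor <;> linarith [ht.1, ht.2]

/-- near majorant -/
def Phi (d : ℕ) (α : ℝ) (ξ : Cyl d) : ℝ≥0∞ :=
  (∏ i, ‖ξ.1 i‖ₑ ^ (-α)) * (Ioo (-1:ℝ) 1).indicator (fun t => ‖t‖ₑ ^ (-α)) ξ.2

lemma Phi_fin (d : ℕ) {α : ℝ} (hα : α < 1) : ∫⁻ ξ, Phi d α ξ < ⊤ := by
  unfold Phi
  have hm : Measurable fun t : AddCircle (1:ℝ) => ‖t‖ₑ ^ (-α) := by fun_prop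
  have hm2 : Measurable ((Ioo (-1:ℝ) 1).indicator (fun t => ‖t‖ₑ ^ (-α))) :=
    Measurable.indicator (by fun_prop) measurableSet_Ioo
  rw [Measure.volume_eq_prod, lintegral_prod_mul (f := fun z : Torus d => ∏ i, ‖z i‖ₑ ^ (-α))
    (Finset.measurable_prod _ fun i _ => hm.comp (measurable_pi_apply i)).aemeasurable
    hm2.aemeasurable, lintegral_pi_prod hm, lintegral_indicator measurableSet_Ioo]
  exact ENNReal.mul_lt_top (ENNReal.pow_lt_top (circle_near hα)) (real_near hα)

lemma enn_anti {a b : ℝ≥0∞} (h : a ≤ b) {z : ℝ} (hz : 0 ≤ z) : b ^ (-z) ≤ a ^ (-z) := by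
  rw [ENNReal.rpow_neg, ENNReal.rpow_neg]
  exact ENNReal.inv_le_inv.mpr (ENNReal.rpow_le_rpow h hz)

lemma norm_le_pnorm (d : ℕ) (ξ : Cyl d) : ‖ξ‖ ≤ pnorm d ξ := by
  unfold pnorm
  have hs : 0 ≤ ∑ i, ‖ξ.1 i‖ ^ 2 := Finset.sum_nonneg fun i _ => sq_nonneg _
  rw [Prod.norm_def, max_le_iff]
  constructor
  · rw [pi_norm_le_iff_of_nonneg (Real.sqrt_nonneg _)]
    intro i
    refine Real.le_sqrt_of_sq_le ?_
    have := Finset.single_le_sum (f := fun i => ‖ξ.1 i‖ ^ 2) (fun i _ => sq_nonneg _)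
      (Finset.mem_univ i)
    nlinarith [sq_nonneg ξ.2]
  · refine Real.le_sqrt_of_sq_le ?_
    rw [Real.norm_eq_abs, sq_abs]
    linarith

lemma near_bound {d : ℕ} (hd : 2 ≤ d) {s γ L : ℝ} (hs : s ∈ Set.Ioo (0:ℝ) 1) (hL : 0 < L)
    (ξ : Cyl d) (hξ : |ξ.2| < 1) :
    ENNReal.ofReal γ / (ENNReal.ofReal (pnorm d ξ)) ^ ((d : ℝ) + s) *
      ENNReal.ofReal (L * ‖ξ.1‖ + |ξ.2|) ≤
    ENNReal.ofReal γ * ENNReal.ofReal (L + 1) * Phi d (((d:ℝ) - 1 + s) / d) ξ := by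
  have hd' : (2:ℝ) ≤ d := by exact_mod_cast hd
  set α := ((d:ℝ) - 1 + s) / d with hα
  have hα0 : 0 ≤ α := div_nonneg (by linarith [hs.1]) (by linarith)
  set m : ℝ≥0∞ := ‖ξ‖ₑ with hm
  have hmt : m ≠ ⊤ := enorm_ne_top
  have hmp : m ≤ ENNReal.ofReal (pnorm d ξ) := by
    rw [hm, ← ofReal_norm]; exact ENNReal.ofReal_le_ofReal (norm_le_pnorm d ξ)
  have hl : ENNReal.ofReal (L * ‖ξ.1‖ + |ξ.2|) ≤ ENNReal.ofReal (L + 1) * m := by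
    rw [hm, ← ofReal_norm, ← ENNReal.ofReal_mul (by linarith)]
    refine ENNReal.ofReal_le_ofReal ?_
    have h1 : ‖ξ.1‖ ≤ ‖ξ‖ := norm_fst_le ξ
    have h2 : |ξ.2| ≤ ‖ξ‖ := norm_snd_le ξ
    nlinarith
  have hPhi : m ^ (-((d:ℝ) - 1 + s)) ≤ Phi d α ξ := by
    have e : m ^ (-((d:ℝ) - 1 + s)) = (∏ _i : Fin (d-1), m ^ (-α)) * m ^ (-α) := by
      rw [Finset.prod_const, ← pow_succ, Finset.card_univ, Fintype.card_fin,
        Nat.sub_add_cancel (by omega), ← ENNReal.rpow_natCast, ← ENNReal.rpow_mul]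
      congr 1
      rw [hα]; field_simp
    rw [e]
    unfold Phi
    rw [indicator_of_mem (show ξ.2 ∈ Ioo (-1:ℝ) 1 from abs_lt.mp hξ)]
    refine mul_le_mul' (Finset.prod_le_prod' fun i _ => ?_) ?_
    · refine enn_anti ?_ hα0
      rw [hm, ← ofReal_norm, ← ofReal_norm]
      exact ENNReal.ofReal_le_ofReal ((norm_le_pi_norm ξ.1 i).trans (norm_fst_le ξ))
    · refine enn_anti ?_ hα0
      rw [hm, ← ofReal_norm, ← ofReal_norm]
      exact ENNReal.ofReal_le_ofReal (norm_snd_le ξ)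
  have hmm : m ^ (-((d:ℝ) + s)) * m ≤ m ^ (-((d:ℝ) - 1 + s)) := by
    rcases eq_or_ne m 0 with h0 | h0
    · simp [h0]
    · nth_rewrite 2 [← ENNReal.rpow_one m]
      rw [← ENNReal.rpow_add _ _ h0 hmt]
      apply le_of_eq; congr 1; ring
  calc _ ≤ ENNReal.ofReal γ * m ^ (-((d:ℝ) + s)) * (ENNReal.ofReal (L + 1) * m) := by
        rw [div_eq_mul_inv, ← ENNReal.rpow_neg]
        exact mul_le_mul' (mul_le_mul' le_rfl (enn_anti hmp (by linarith [hs.1]))) hl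
    _ = ENNReal.ofReal γ * ENNReal.ofReal (L + 1) * (m ^ (-((d:ℝ) + s)) * m) := by ring
    _ ≤ _ := by gcongr; exact hmm.trans hPhi

lemma far_bound {d : ℕ} {p γ L : ℝ} (hp : 2 < p) (hγ : 0 < γ) (hL : 0 < L)
    (ξ : Cyl d) (hξ : 1 ≤ |ξ.2|) :
    γ / |ξ.2| ^ p * (L * ‖ξ.1‖ + |ξ.2|) ≤
      γ * (L + 1) * 2 ^ (p - 1) * (1 + ‖ξ.2‖) ^ (-(p - 1)) := by
  set t := |ξ.2| with ht
  have ht0 : 0 < t := by linarith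
  have h1 : ‖ξ.1‖ ≤ 1 := by
    rw [pi_norm_le_iff_of_nonneg zero_le_one]
    intro i
    have := AddCircle.norm_le_half_period (1:ℝ) (x := ξ.1 i) one_ne_zero
    norm_num at this
    linarith
  have h2 : L * ‖ξ.1‖ + t ≤ (L + 1) * t := by nlinarith [norm_nonneg ξ.1]
  have h3 : t ^ p = t ^ (p-1) * t := by
    rw [← Real.rpow_add_one ht0.ne']; congr 1; ring
  have h4 : (1 + t) ^ (p-1) ≤ 2 ^ (p-1) * t ^ (p-1) := by
    rw [← Real.mul_rpow (by norm_num) ht0.le]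
    exact Real.rpow_le_rpow (by linarith) (by linarith) (by linarith)
  have h5 : 0 < t ^ (p-1) := Real.rpow_pos_of_pos ht0 _
  have h6 : 0 < (1 + t) ^ (p-1) := Real.rpow_pos_of_pos (by linarith) _
  rw [Real.norm_eq_abs, ← ht, Real.rpow_neg (by linarith)]
  calc _ ≤ γ / t ^ p * ((L + 1) * t) := by gcongr
    _ = γ * (L + 1) * (t ^ (p-1))⁻¹ := by rw [h3]; field_simp
    _ ≤ γ * (L + 1) * (2 ^ (p - 1) * ((1 + t) ^ (p-1))⁻¹) := by
        gcongr
        rw [← div_eq_mul_inv, le_div_iff₀ h6, inv_mul_le_iff₀ h5]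
        linarith
    _ = _ := by ring

lemma PK_lip_finite (d : ℕ) (hd : 2 ≤ d) (K : Cyl d → ℝ)
    (hKmeas : Measurable K)
    (p s γ : ℝ) (hp : 2 < p) (hs : s ∈ Set.Ioo (0:ℝ) 1) (hγ : 0 < γ)
    (hK1 : ∀ ξ : Cyl d, 1 ≤ |ξ.2| → K ξ ≤ γ / |ξ.2| ^ p)
    (hK2 : ∀ ξ : Cyl d, |ξ.2| < 1 →
      ENNReal.ofReal (K ξ) ≤
        ENNReal.ofReal γ / (ENNReal.ofReal (pnorm d ξ)) ^ ((d : ℝ) + s))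
    (L : ℝ) (hL : 0 < L) (E : Set (Cyl d)) (hE : E ∈ LipClass d L) : PK d K E < ⊤ := by
  obtain ⟨g, hg, rfl⟩ := hE
  refine (PK_subgraph_le hKmeas hL hg).trans_lt ?_
  have hd' : (2:ℝ) ≤ d := by exact_mod_cast hd
  set α := ((d:ℝ) - 1 + s) / d with hα
  have hα1 : α < 1 := by rw [hα, div_lt_one (by linarith)]; linarith [hs.2]
  set C := γ * (L + 1) * 2 ^ (p - 1)
  have hC : 0 ≤ C := by positivity
  have hfm : Measurable fun ξ : Cyl d =>
      ENNReal.ofReal C * ENNReal.ofReal ((1 + ‖ξ.2‖) ^ (-(p - 1))) := by fun_prop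
  calc _ ≤ ∫⁻ ξ : Cyl d, (ENNReal.ofReal C * ENNReal.ofReal ((1 + ‖ξ.2‖) ^ (-(p - 1))) +
        ENNReal.ofReal γ * ENNReal.ofReal (L + 1) * Phi d α ξ) := by
        refine lintegral_mono fun ξ => ?_
        rcases lt_or_ge |ξ.2| 1 with h | h
        · refine le_trans ?_ le_add_self
          exact le_trans (by gcongr; exact hK2 ξ h) (near_bound hd hs hL ξ h)
        · refine le_trans ?_ le_self_add
          have h0 : 0 ≤ γ / |ξ.2| ^ p := by positivity
          calc _ ≤ ENNReal.ofReal (γ / |ξ.2| ^ p) * ENNReal.ofReal (L * ‖ξ.1‖ + |ξ.2|) := by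
                gcongr; exact hK1 ξ h
            _ ≤ _ := by
                rw [← ENNReal.ofReal_mul h0, ← ENNReal.ofReal_mul hC]
                exact ENNReal.ofReal_le_ofReal (far_bound hp hγ hL ξ h)
    _ < ⊤ := by
        rw [lintegral_add_left hfm, lintegral_const_mul' _ _ ENNReal.ofReal_ne_top,
          lintegral_const_mul' _ _ (ENNReal.mul_ne_top ENNReal.ofReal_ne_top ENNReal.ofReal_ne_top)]
        refine ENNReal.add_lt_top.mpr ⟨ENNReal.mul_lt_top ENNReal.ofReal_lt_top ?_,
          ENNReal.mul_lt_top (ENNReal.mul_lt_top ENNReal.ofReal_lt_top ENNReal.ofReal_lt_top)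
            (Phi_fin d hα1)⟩
        have hi := finite_integral_one_add_norm (E := ℝ) (μ := volume) (r := p - 1)
          (by simp; linarith)
        rw [Measure.volume_eq_prod, lintegral_prod _ (by fun_prop)]
        simpa using hi

/-- Under the decay assumptions on the kernel, `𝒫_K` is a generalized perimeter,
i.e. it satisfies properties (i)-(vi). -/
theorem PK_is_generalized_perimeter (d : ℕ) (hd : 2 ≤ d) (K : Cyl d → ℝ)
    (hKmeas : Measurable K) (hKnn : ∀ ξ, 0 ≤ K ξ)
    (p s γ : ℝ) (hp : 2 < p) (hs : s ∈ Set.Ioo (0:ℝ) 1) (hγ : 0 < γ)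
    (hK1 : ∀ ξ : Cyl d, 1 ≤ |ξ.2| → K ξ ≤ γ / |ξ.2| ^ p)
    (hK2 : ∀ ξ : Cyl d, |ξ.2| < 1 →
      ENNReal.ofReal (K ξ) ≤
        ENNReal.ofReal γ / (ENNReal.ofReal (pnorm d ξ)) ^ ((d : ℝ) + s)) :
    ∃ P : GenPerimeter d, P.P = PK d K := by
  exact ⟨{
    P := PK d K
    lip_finite := PK_lip_finite d hd K hKmeas p s γ hp hs hγ hK1 hK2
    empty_eq := by simp [PK]
    univ_eq := by simp [PK]
    congr_ae := PK_congr K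
    lsc := PK_lsc hKmeas
    submodular := PK_submod hKmeas
    transl_inv := PK_transl K }, rfl⟩
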